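/- arXiv:2502.05683 — 2 statements merged into one kernel-verified Lean document; each statement's English description precedes it below -/
import Mathlib

section
/- Let u : ℝ^n → ℝ be C^{1,1} with 1-Lipschitz derivative, and suppose x, y, z ∈ ℝ^n satisfy u(y) + ⟨Du(y), z−y⟩ − u(x) − ⟨Du(x), z−x⟩ = (1/2)(‖y−z‖² + ‖x−z‖²). Then ‖Du(y) − Du(z)‖ = ‖y−z‖ and ‖Du(x) − Du(z)‖ = ‖x−z‖; more specifically, u(y) + ⟨Du(y), z−y⟩ − u(z) = (1/2)‖y−z‖² and −u(x) − ⟨Du(x), z−x⟩ + u(z) = (1/2)‖x−z‖². -/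
open MeasureTheory RealInnerProductSpace Set

noncomputable section

/-- Euclidean space ℝ^n. -/
abbrev En (n : ℕ) := EuclideanSpace ℝ (Fin n)

theorem taylor_aux {n : ℕ} (u : En n → ℝ) (hdiff : Differentiable ℝ u)
    (hlip : LipschitzWith 1 (gradient u)) (a b : En n) :
    |u b - u a - ⟪gradient u a, b - a⟫| ≤ (1/2) * ‖b - a‖^2 := by
  have hd : ∀ t : ℝ, HasDerivAt (fun t : ℝ => u (a + t • (b - a)) - u a
      - t * ⟪gradient u a, b - a⟫)
      (⟪gradient u (a + t • (b - a)), b - a⟫ - ⟪gradient u a, b - a⟫) t := by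
    intro t
    have h1 : HasDerivAt (fun t : ℝ => a + t • (b - a)) (b - a) t := by
      simpa using ((hasDerivAt_id t).smul_const (b - a)).const_add a
    have h2 := (hdiff (a + t • (b - a))).hasGradientAt.hasFDerivAt.comp_hasDerivAt t h1
    have h3 := (hasDerivAt_id t).mul_const (⟪gradient u a, b - a⟫ : ℝ)
    have h4 := (h2.sub_const (u a)).sub h3
    rw [one_mul] at h4
    exact h4
  have hB : ∀ t : ℝ, HasDerivAt (fun t : ℝ => (1/2) * ‖b - a‖^2 * t^2) (t * ‖b - a‖^2) t := by
    intro t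
    have := (hasDerivAt_pow 2 t).const_mul ((1/2) * ‖b - a‖^2)
    exact this.congr_deriv (by norm_num; ring)
  have key := image_norm_le_of_norm_deriv_right_le_deriv_boundary (a := (0:ℝ)) (b := 1)
    (fun t _ => (hd t).continuousAt.continuousWithinAt)
    (fun t _ => (hd t).hasDerivWithinAt) (by simp) hB (by
      intro t ht
      rw [← inner_sub_left]
      refine (norm_inner_le_norm _ _).trans ?_
      have h5 := hlip.dist_le_mul (a + t • (b - a)) a
      rw [dist_eq_norm, dist_eq_norm, add_sub_cancel_left, norm_smul, Real.norm_eq_abs,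
        abs_of_nonneg ht.1, NNReal.coe_one, one_mul] at h5
      nlinarith [norm_nonneg (b - a)]) (x := 1) (by simp)
  simpa using key

theorem eq_aux {n : ℕ} (u : En n → ℝ) (g : En n → En n)
    (H : ∀ a b, |u b - u a - ⟪g a, b - a⟫| ≤ (1/2) * ‖b - a‖^2) (y z : En n)
    (h : u y + ⟪g y, z - y⟫ - u z = (1/2) * ‖y - z‖^2) : ‖g y - g z‖ = ‖y - z‖ := by
  set G := g z - g y + (z - y) with hG
  have h1 := (abs_le.1 (H y (z - (1/2 : ℝ) • G))).1
  have h2 := (abs_le.1 (H z (z - (1/2 : ℝ) • G))).2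
  have e1 : z - (1/2 : ℝ) • G - y = (z - y) - (1/2 : ℝ) • G := by abel
  have e2 : z - (1/2 : ℝ) • G - z = - ((1/2 : ℝ) • G) := by abel
  rw [e1, norm_sub_sq_real, inner_sub_right, inner_smul_right, inner_smul_right, norm_smul] at h1
  rw [e2, inner_neg_right, inner_smul_right, norm_neg, norm_smul] at h2
  have e3 : ‖G‖^2 = ⟪g z, G⟫ - ⟪g y, G⟫ + ⟪z - y, G⟫ := by
    rw [← inner_sub_left, ← inner_add_left, ← hG, real_inner_self_eq_norm_sq]
  rw [norm_sub_rev y z] at h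
  norm_num at h1 h2
  have e4 : ‖G‖ = 0 := by
    have : ‖G‖^2 ≤ 0 := by nlinarith
    nlinarith [norm_nonneg G]
  have e5 : g y - g z = z - y := by
    have := norm_eq_zero.1 e4
    rw [hG] at this
    have h6 : g y - g z = z - y - (g z - g y + (z - y)) := by abel
    rw [h6, this, sub_zero]
  rw [e5, norm_sub_rev]

/-- if `u` is `C^{1,1}` with 1-Lipschitz derivative (gradient) and
`u(y) + ⟨Du(y), z−y⟩ − u(x) − ⟨Du(x), z−x⟩ = (1/2)(‖y−z‖² + ‖x−z‖²)`, then
`‖Du(y) − Du(z)‖ = ‖y−z‖`, `‖Du(x) − Du(z)‖ = ‖x−z‖`, and moreover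
`u(y) + ⟨Du(y), z−y⟩ − u(z) = (1/2)‖y−z‖²` and `−u(x) − ⟨Du(x), z−x⟩ + u(z) = (1/2)‖x−z‖²`. -/
theorem stmt0 {n : ℕ} (u : En n → ℝ) (hdiff : Differentiable ℝ u)
    (hlip : LipschitzWith 1 (gradient u)) (x y z : En n)
    (h : u y + ⟪gradient u y, z - y⟫ - u x - ⟪gradient u x, z - x⟫
      = (1/2) * (‖y - z‖^2 + ‖x - z‖^2)) :
    ‖gradient u y - gradient u z‖ = ‖y - z‖ ∧
    ‖gradient u x - gradient u z‖ = ‖x - z‖ ∧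
    u y + ⟪gradient u y, z - y⟫ - u z = (1/2) * ‖y - z‖^2 ∧
    -u x - ⟪gradient u x, z - x⟫ + u z = (1/2) * ‖x - z‖^2 := by
  have T := taylor_aux u hdiff hlip
  have h1 := (abs_le.1 (T y z)).1
  have h2 := (abs_le.1 (T x z)).2
  rw [norm_sub_rev] at h1 h2
  have hy : u y + ⟪gradient u y, z - y⟫ - u z = (1/2) * ‖y - z‖^2 := by linarith
  have hx : -u x - ⟪gradient u x, z - x⟫ + u z = (1/2) * ‖x - z‖^2 := by linarith
  refine ⟨eq_aux u _ T y z hy, ?_, hy, hx⟩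
  have := eq_aux (fun a => - u a) (fun a => - gradient u a) (by
    intro a b
    rw [← abs_neg, inner_neg_left]
    convert T a b using 2
    ring) x z (by rw [inner_neg_left]; linarith)
  rw [← this, ← norm_neg]
  congr 1
  abel
end
end

section
/- Let V₁, V₂ ⊆ ℝ^n be orthogonal, mutually complementing linear subspaces and let f : ℝ^n → ℝ be differentiable with Lipschitz gradient Df. Then (by Rademacher's theorem Df is differentiable Lebesgue-almost everywhere; denote by D²f(x) its derivative where it exists) f is convex-concave with respect to V₁, V₂ if and only if for Lebesgue-almost every x ∈ ℝ^n one has ⟨D²f(x)w, w⟩ ≥ 0 for all w ∈ V₁ and ⟨D²f(x)w, w⟩ ≤ 0 for all w ∈ V₂. -/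
open MeasureTheory RealInnerProductSpace Set

noncomputable section

/-- `f` is convex-concave with respect to `V₁, V₂`: for each `v₁ ∈ V₁` the map
`v₂ ↦ f(v₁+v₂)` is concave on `V₂`, and for each `v₂ ∈ V₂` the map `v₁ ↦ f(v₁+v₂)`
is convex on `V₁`. -/
def ConvexConcave {n : ℕ} (V₁ V₂ : Submodule ℝ (En n)) (f : En n → ℝ) : Prop :=
  (∀ v₁ ∈ V₁, ConcaveOn ℝ Set.univ (fun v₂ : V₂ => f (v₁ + v₂))) ∧
  (∀ v₂ ∈ V₂, ConvexOn ℝ Set.univ (fun v₁ : V₁ => f (v₁ + v₂)))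

lemma aux_hasDerivAt {n : ℕ} {f : En n → ℝ} (hdiff : Differentiable ℝ f) (x w : En n) (t : ℝ) :
    HasDerivAt (fun t : ℝ => f (x + t • w)) ⟪gradient f (x + t • w), w⟫ t := by
  have h1 : HasDerivAt (fun t : ℝ => x + t • w) w t := by
    simpa using ((hasDerivAt_id t).smul_const w).const_add x
  have h2 := (hdiff (x + t • w)).hasFDerivAt.comp_hasDerivAt t h1
  rw [inner_gradient_left]
  exact h2

lemma aux_hasDerivAt2 {n : ℕ} {g : En n → En n} (x w : En n) (t : ℝ)
    (hg : DifferentiableAt ℝ g (x + t • w)) :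
    HasDerivAt (fun t : ℝ => ⟪g (x + t • w), w⟫) ⟪fderiv ℝ g (x + t • w) w, w⟫ t := by
  have h1 : HasDerivAt (fun t : ℝ => x + t • w) w t := by
    simpa using ((hasDerivAt_id t).smul_const w).const_add x
  have h2 := hg.hasFDerivAt.comp_hasDerivAt t h1
  simpa using h2.inner ℝ (hasDerivAt_const t w)

lemma aux_forward {n : ℕ} {f : En n → ℝ} (hdiff : Differentiable ℝ f) (x w : En n)
    (hc : ConvexOn ℝ univ (fun t : ℝ => f (x + t • w)))
    (hg : DifferentiableAt ℝ (gradient f) x) :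
    0 ≤ ⟪fderiv ℝ (gradient f) x w, w⟫ := by
  have hm := hc.monotoneOn_deriv (fun t _ => (aux_hasDerivAt hdiff x w t).differentiableAt)
  rw [monotoneOn_univ] at hm
  have he : deriv (fun t : ℝ => f (x + t • w)) = fun t => ⟪gradient f (x + t • w), w⟫ :=
    funext fun t => (aux_hasDerivAt hdiff x w t).deriv
  rw [he] at hm
  have h2 := aux_hasDerivAt2 (g := gradient f) x w 0 (by simpa using hg)
  have h3 := hm.deriv_nonneg (x := 0)
  rw [h2.deriv] at h3
  simpa using h3

lemma aux_lip {n : ℕ} {g : En n → En n} {K : NNReal} (hlip : LipschitzWith K g) (x w : En n) :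
    ∃ C : NNReal, LipschitzWith C (fun t : ℝ => ⟪g (x + t • w), w⟫) := by
  refine ⟨K * ‖w‖₊ * ‖w‖₊, LipschitzWith.of_dist_le_mul fun s t => ?_⟩
  rw [Real.dist_eq, ← inner_sub_left]
  refine (abs_real_inner_le_norm _ _).trans ?_
  have h := hlip.dist_le_mul (x + s • w) (x + t • w)
  have h' : dist (x + s • w) (x + t • w) = dist s t * ‖w‖ := by
    rw [dist_add_left, dist_eq_norm, ← sub_smul, norm_smul, dist_eq_norm]
  rw [h', dist_eq_norm] at h
  push_cast
  calc _ ≤ (K * (dist s t * ‖w‖)) * ‖w‖ := by gcongr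
    _ = _ := by ring

lemma aux_ae {n : ℕ} (p : En n → Prop) (w : En n) (h : ∀ᵐ x ∂(volume : Measure (En n)), p x) :
    ∀ᵐ x ∂(volume : Measure (En n)), ∀ᵐ t ∂(volume : Measure ℝ), p (x + t • w) := by
  obtain ⟨s, hs, ms, h0⟩ := exists_measurable_superset_of_null (ae_iff.1 h)
  have key : ∀ᵐ x ∂(volume : Measure (En n)), ∀ᵐ t ∂(volume : Measure ℝ), x + t • w ∈ sᶜ := by
    rw [Measure.ae_ae_comm]
    · refine Filter.Eventually.of_forall fun t => ?_
      have h1 : ∀ᵐ x ∂(volume : Measure (En n)), x ∈ sᶜ := by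
        rw [ae_iff]; simpa using h0
      exact (measurePreserving_add_right volume (t • w)).quasiMeasurePreserving.ae h1
    · have : Measurable (fun z : En n × ℝ => z.1 + z.2 • w) := by fun_prop
      exact this ms.compl
  filter_upwards [key] with x hx
  filter_upwards [hx] with t ht
  by_contra hp
  exact ht (hs hp)

lemma aux_backward {n : ℕ} {f : En n → ℝ} (hdiff : Differentiable ℝ f) {K : NNReal}
    (hlip : LipschitzWith K (gradient f)) (w : En n)
    (h : ∀ᵐ x ∂(volume : Measure (En n)), DifferentiableAt ℝ (gradient f) x ∧
      0 ≤ ⟪fderiv ℝ (gradient f) x w, w⟫) (x : En n) :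
    ConvexOn ℝ univ (fun t : ℝ => f (x + t • w)) := by
  have hmono : ∀ s t : ℝ, s ≤ t → ∀ x : En n,
      ⟪gradient f (x + s • w), w⟫ ≤ ⟪gradient f (x + t • w), w⟫ := by
    intro s t hst
    have hae : ∀ᵐ x ∂(volume : Measure (En n)),
        ⟪gradient f (x + s • w), w⟫ ≤ ⟪gradient f (x + t • w), w⟫ := by
      filter_upwards [aux_ae _ w h] with x hx
      obtain ⟨C, hC⟩ := aux_lip hlip x w
      have hac := (hC.lipschitzOnWith (s := uIcc s t)).absolutelyContinuousOnInterval
      have h1 := hac.integral_deriv_eq_sub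
      have h2 : 0 ≤ ∫ u in s..t, deriv (fun t : ℝ => ⟪gradient f (x + t • w), w⟫) u := by
        apply intervalIntegral.integral_nonneg_of_ae hst
        filter_upwards [hx] with u hu
        rw [(aux_hasDerivAt2 x w u hu.1).deriv]
        exact hu.2
      linarith
    have hd : Dense {x : En n | ⟪gradient f (x + s • w), w⟫ ≤ ⟪gradient f (x + t • w), w⟫} :=
      Measure.dense_of_ae hae
    have hcont := hlip.continuous
    have hcl : IsClosed {x : En n | ⟪gradient f (x + s • w), w⟫ ≤ ⟪gradient f (x + t • w), w⟫} :=
      isClosed_le (by fun_prop) (by fun_prop)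
    intro x
    have := hcl.closure_eq ▸ hd.closure_eq
    exact (this ▸ mem_univ x : x ∈ {x : En n | _})
  apply Monotone.convexOn_univ_of_deriv
  · exact fun t => (aux_hasDerivAt hdiff x w t).differentiableAt
  · intro s t hst
    rw [(aux_hasDerivAt hdiff x w s).deriv, (aux_hasDerivAt hdiff x w t).deriv]
    exact hmono s t hst x

lemma aux_lines {n : ℕ} (V W : Submodule ℝ (En n)) (hc : V ⊔ W = ⊤) (f : En n → ℝ) :
    (∀ v₂ ∈ W, ConvexOn ℝ Set.univ (fun v₁ : V => f (v₁ + v₂))) ↔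
      ∀ x, ∀ w ∈ V, ConvexOn ℝ univ (fun t : ℝ => f (x + t • w)) := by
  constructor
  · intro h x w hw
    obtain ⟨a, ha, b, hb, rfl⟩ := Submodule.mem_sup.1 (hc ▸ Submodule.mem_top : x ∈ V ⊔ W)
    refine ⟨convex_univ, fun s _ t _ p q hp hq hpq => ?_⟩
    have := (h b hb).2 (mem_univ (⟨a, ha⟩ + s • ⟨w, hw⟩ : V)) (mem_univ (⟨a, ha⟩ + t • ⟨w, hw⟩ : V))
      hp hq hpq
    have e : ∀ r : ℝ, a + b + r • w = a + r • w + b := fun r => by abel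
    simp only [e]
    have e1 : a + (p • s + q • t) • w + b
        = ((p • (⟨a, ha⟩ + s • ⟨w, hw⟩) + q • (⟨a, ha⟩ + t • ⟨w, hw⟩) : V) : En n) + b := by
      change _ = p • (a + s • w) + q • (a + t • w) + b
      obtain rfl : q = 1 - p := by linarith
      simp only [smul_eq_mul]
      module
    rw [e1]
    exact this
  · intro h b hb
    refine ⟨convex_univ, fun u _ v _ p q hp hq hpq => ?_⟩
    have := (h (u + b) (v - u) (V.sub_mem v.2 u.2)).2 (mem_univ 0) (mem_univ 1) hp hq hpq
    have e1 : ((p • u + q • v : V) : En n) + b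
        = u + b + (p • (0 : ℝ) + q • (1 : ℝ)) • ((v : En n) - u) := by
      change p • (u : En n) + q • (v : En n) + b = _
      obtain rfl : q = 1 - p := by linarith
      simp only [smul_eq_mul]
      module
    have e2 : (u : En n) + b + (0 : ℝ) • ((v : En n) - u) = u + b := by module
    have e3 : (u : En n) + b + (1 : ℝ) • ((v : En n) - u) = v + b := by module
    simp only [e2, e3, ← e1] at this
    exact this

lemma aux_gradient_neg {n : ℕ} (f : En n → ℝ) : gradient (-f) = -gradient f := by
  funext x
  simp [gradient, fderiv_neg]

/-- for `f` differentiable with Lipschitz gradient, `f` is convex-concave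
with respect to orthogonal, mutually complementing subspaces `V₁, V₂` iff for
Lebesgue-a.e. `x` the second derivative `D²f(x)` (the derivative of the gradient,
which exists a.e. by Rademacher) is positive semidefinite on `V₁` and negative
semidefinite on `V₂`. -/
theorem stmt3 {n : ℕ} (V₁ V₂ : Submodule ℝ (En n))
    (horth : V₁ ≤ V₂ᗮ) (hcompl : V₁ ⊔ V₂ = ⊤)
    (f : En n → ℝ) (hdiff : Differentiable ℝ f)
    (K : NNReal) (hlip : LipschitzWith K (gradient f)) :
    ConvexConcave V₁ V₂ f ↔
      ∀ᵐ x ∂(volume : Measure (En n)),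
        DifferentiableAt ℝ (gradient f) x ∧
        (∀ w ∈ V₁, 0 ≤ ⟪fderiv ℝ (gradient f) x w, w⟫) ∧
        (∀ w ∈ V₂, ⟪fderiv ℝ (gradient f) x w, w⟫ ≤ 0) := by
  have hae := hlip.ae_differentiableAt (μ := (volume : Measure (En n)))
  have hneg := aux_gradient_neg f
  have hlip' : LipschitzWith K (gradient (-f)) := by rw [hneg]; exact hlip.neg
  have hD : ∀ x, DifferentiableAt ℝ (gradient f) x → DifferentiableAt ℝ (gradient (-f)) x := by
    intro x hx; rw [hneg]; exact hx.neg
  have hI : ∀ x w, ⟪fderiv ℝ (gradient (-f)) x w, w⟫ = -⟪fderiv ℝ (gradient f) x w, w⟫ := by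
    intro x w; rw [hneg, fderiv_neg]; simp
  have hcc : ConvexConcave V₁ V₂ f ↔
      (∀ x, ∀ w ∈ V₂, ConvexOn ℝ univ (fun t : ℝ => (-f) (x + t • w))) ∧
      (∀ x, ∀ w ∈ V₁, ConvexOn ℝ univ (fun t : ℝ => f (x + t • w))) := by
    rw [← aux_lines V₁ V₂ hcompl, ← aux_lines V₂ V₁ (by rwa [sup_comm])]
    unfold ConvexConcave
    refine and_congr_left fun _ => forall₂_congr fun v _ => ?_
    rw [← neg_convexOn_iff]
    simp only [add_comm v]
    rfl
  rw [hcc]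
  constructor
  · rintro ⟨h2, h1⟩
    filter_upwards [hae] with x hx
    refine ⟨hx, fun w hw => aux_forward hdiff x w (h1 x w hw) hx, fun w hw => ?_⟩
    have := aux_forward hdiff.neg x w (h2 x w hw) (hD x hx)
    rw [hI] at this
    linarith
  · intro h
    refine ⟨fun x w hw => aux_backward hdiff.neg hlip' w ?_ x,
      fun x w hw => aux_backward hdiff hlip w ?_ x⟩
    · filter_upwards [h] with y hy
      refine ⟨hD y hy.1, ?_⟩
      rw [hI]
      linarith [hy.2.2 w hw]
    · filter_upwards [h] with y hy
      exact ⟨hy.1, hy.2.1 w hw⟩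
end
end
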